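/- Let g > 0, c_1 > 0, and c_3 ∈ ℝ, and for two scene points i and j let ρ_i, ρ_j ∈ (0,1) be albedos, η_i, η_j > 0 be shading values, I_v,i = g·ρ_i·η_i and I_v,j = g·ρ_j·η_j be visible intensities, and I_t,i, I_t,j be thermal intensities satisfying (1−ρ_i)·η_i = c_1·I_t,i − c_3 and (1−ρ_j)·η_j = c_1·I_t,j − c_3. If I_v,i > I_v,j and I_t,i < I_t,j, then ρ_i > ρ_j; and if I_v,i < I_v,j and I_t,i > I_t,j, then ρ_i < ρ_j. -/

import Mathlib

theorem albedo_aux (a b x y : ℝ) (ha : a < 1) (hb : 0 < b) (hx : 0 < x) (hy : 0 < y)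
    (h1 : b * y < a * x) (h2 : (1 - a) * x < (1 - b) * y) : b < a := by
  by_contra hab
  have hab : a ≤ b := not_lt.mp hab
  have h3 : a * x ≤ b * x := mul_le_mul_of_nonneg_right hab hx.le
  have h4 : (1 - b) * y ≤ (1 - a) * y := mul_le_mul_of_nonneg_right (by linarith) hy.le
  have h5 : y < x := lt_of_mul_lt_mul_left (h1.trans_le h3) hb.le
  have h6 : x < y := lt_of_mul_lt_mul_left (h2.trans_le h4) (by linarith)
  linarith

theorem albedo_ordinal_thermal
    (g c₁ c₃ ρi ρj ηi ηj Ivi Ivj Iti Itj : ℝ)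
    (hg : 0 < g) (hc₁ : 0 < c₁)
    (hρi : ρi ∈ Set.Ioo (0 : ℝ) 1) (hρj : ρj ∈ Set.Ioo (0 : ℝ) 1)
    (hηi : 0 < ηi) (hηj : 0 < ηj)
    (hIvi : Ivi = g * ρi * ηi) (hIvj : Ivj = g * ρj * ηj)
    (hSi : (1 - ρi) * ηi = c₁ * Iti - c₃)
    (hSj : (1 - ρj) * ηj = c₁ * Itj - c₃) :
    (Ivi > Ivj → Iti < Itj → ρi > ρj) ∧ (Ivi < Ivj → Iti > Itj → ρi < ρj) := by
  subst hIvi hIvj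
  constructor
  · intro h1 h2
    have h3 := mul_lt_mul_of_pos_left h2 hc₁
    refine albedo_aux ρi ρj ηi ηj hρi.2 hρj.1 hηi hηj ?_ (by linarith)
    exact lt_of_mul_lt_mul_left (by linarith : g * (ρj * ηj) < g * (ρi * ηi)) hg.le
  · intro h1 h2
    have h3 := mul_lt_mul_of_pos_left h2 hc₁
    refine albedo_aux ρj ρi ηj ηi hρj.2 hρi.1 hηj hηi ?_ (by linarith)
    exact lt_of_mul_lt_mul_left (by linarith : g * (ρi * ηi) < g * (ρj * ηj)) hg.le
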